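/- Pisier's inequality: let Z ~ N(0, I_n) and F : ℝⁿ → ℝ be differentiable with suitable integrability. Then for every λ ∈ ℝ, E[exp(λ|F(Z) − E F(Z)|)] ≤ 2·E[exp((λ²π²/8)·‖∇F(Z)‖²)]. -/

import Mathlib

open MeasureTheory Real ProbabilityTheory

/-- Jensen's inequality for `2 cosh`, without integrability hypotheses. -/
lemma pisier_jensen {α : Type*} [MeasurableSpace α] (ν : Measure α) [IsProbabilityMeasure ν]
    (f : α → ℝ) (hf : Measurable f) :
    ENNReal.ofReal (2 * Real.cosh (∫ x, f x ∂ν)) ≤ ∫⁻ x, ENNReal.ofReal (2 * Real.cosh (f x)) ∂ν := by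
  by_cases htop : ∫⁻ x, ENNReal.ofReal (2 * Real.cosh (f x)) ∂ν = ⊤
  · rw [htop]; exact le_top
  have hm : Measurable fun x => 2 * Real.cosh (f x) := by fun_prop
  have hpos : ∀ t : ℝ, 0 ≤ 2 * Real.cosh t := fun t => by have := Real.cosh_pos t; positivity
  have hc : Integrable (fun x => 2 * Real.cosh (f x)) ν := by
    refine ⟨hm.aestronglyMeasurable, ?_⟩
    rw [hasFiniteIntegral_iff_ofReal (ae_of_all _ fun x => hpos _)]
    exact lt_top_iff_ne_top.2 htop
  have habs : ∀ t : ℝ, |t| ≤ 2 * Real.cosh t := by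
    intro t
    rw [Real.cosh_eq, abs_le]
    have h1 := Real.add_one_le_exp t
    have h2 := Real.add_one_le_exp (-t)
    have h3 := Real.exp_pos t
    have h4 := Real.exp_pos (-t)
    constructor <;> linarith
  have hfi : Integrable f ν := by
    refine hc.mono hf.aestronglyMeasurable (ae_of_all _ fun x => ?_)
    rw [Real.norm_eq_abs, Real.norm_eq_abs, abs_of_nonneg (hpos _)]
    exact habs _
  rw [← ofReal_integral_eq_lintegral_ofReal hc (ae_of_all _ fun x => hpos _)]
  apply ENNReal.ofReal_le_ofReal
  set m := ∫ x, f x ∂ν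
  have key : ∀ t : ℝ, 2 * Real.cosh m + 2 * Real.sinh m * (t - m) ≤ 2 * Real.cosh t := by
    intro t
    rw [Real.cosh_eq, Real.cosh_eq, Real.sinh_eq]
    have h1 : rexp m * (t - m + 1) ≤ rexp t := by
      have := mul_le_mul_of_nonneg_left (Real.add_one_le_exp (t - m)) (Real.exp_pos m).le
      rwa [← Real.exp_add, add_sub_cancel] at this
    have h2 : rexp (-m) * (m - t + 1) ≤ rexp (-t) := by
      have := mul_le_mul_of_nonneg_left (Real.add_one_le_exp (m - t)) (Real.exp_pos (-m)).le
      rwa [← Real.exp_add, show -m + (m - t) = -t by ring] at this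
    linarith
  have hi : Integrable (fun x => 2 * Real.cosh m + 2 * Real.sinh m * (f x - m)) ν :=
    (integrable_const _).add ((hfi.sub (integrable_const _)).const_mul _)
  have := integral_mono hi hc fun x => key (f x)
  have hi2 : Integrable (fun x => 2 * Real.sinh m * (f x - m)) ν :=
    (hfi.sub (integrable_const _)).const_mul _
  rw [integral_add (integrable_const _) hi2,
    integral_const_mul (2 * Real.sinh m), integral_sub hfi (integrable_const _)] at this
  simpa [m] using this

lemma pisier_mgf {n : ℕ} (a : ℝ) (L : StrongDual ℝ (EuclideanSpace ℝ (Fin n))) :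
    ∫⁻ y, ENNReal.ofReal (2 * Real.cosh (a * L y)) ∂(stdGaussian (EuclideanSpace ℝ (Fin n)))
      = 2 * ENNReal.ofReal (rexp (a ^ 2 * ‖L‖ ^ 2 / 2)) := by
  have hmap := IsGaussian.map_eq_gaussianReal (μ := stdGaussian (EuclideanSpace ℝ (Fin n))) L
  rw [integral_strongDual_stdGaussian, variance_dual_stdGaussian] at hmap
  have h1 : ∀ t : ℝ, ∫⁻ y, ENNReal.ofReal (rexp (t * L y))
      ∂(stdGaussian (EuclideanSpace ℝ (Fin n))) = ENNReal.ofReal (rexp (t ^ 2 * ‖L‖ ^ 2 / 2)) := by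
    intro t
    have hint : Integrable (fun y => rexp (t * L y)) (stdGaussian (EuclideanSpace ℝ (Fin n))) := by
      have := integrable_exp_mul_gaussianReal (μ := 0) (v := (‖L‖ ^ 2).toNNReal) t
      rw [← hmap] at this
      exact this.comp_measurable (by fun_prop)
    rw [← ofReal_integral_eq_lintegral_ofReal hint (ae_of_all _ fun _ => (Real.exp_pos _).le)]
    have := mgf_gaussianReal hmap t
    rw [mgf] at this
    rw [this, Real.coe_toNNReal _ (by positivity)]
    congr 2; ring
  have h2 : ∀ y, ENNReal.ofReal (2 * Real.cosh (a * L y)) =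
      ENNReal.ofReal (rexp (a * L y)) + ENNReal.ofReal (rexp (-a * L y)) := by
    intro y
    rw [← ENNReal.ofReal_add (Real.exp_pos _).le (Real.exp_pos _).le, Real.cosh_eq]
    congr 1
    rw [neg_mul]; ring
  simp_rw [h2]
  rw [lintegral_add_left (by fun_prop), h1, h1, neg_sq, two_mul]

/-- Pisier's inequality: for a standard Gaussian vector Z in ℝⁿ and differentiable F,
E[exp(λ|F(Z) − E F(Z)|)] ≤ 2 E[exp((λ²π²/8)‖∇F(Z)‖²)], both sides possibly infinite. -/
theorem pisier_inequality {n : ℕ}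
    (μ : Measure (EuclideanSpace ℝ (Fin n)))
    (hμ : μ = (Measure.pi fun _ : Fin n => gaussianReal 0 1).map
        ⇑(EuclideanSpace.equiv (Fin n) ℝ).symm)
    (F : EuclideanSpace ℝ (Fin n) → ℝ) (hF : Differentiable ℝ F)
    (hFint : Integrable F μ) (l : ℝ) :
    ∫⁻ ω, ENNReal.ofReal (Real.exp (l * |F ω - ∫ ω', F ω' ∂μ|)) ∂μ
      ≤ 2 * ∫⁻ ω, ENNReal.ofReal (Real.exp (l ^ 2 * π ^ 2 / 8 * ‖gradient F ω‖ ^ 2)) ∂μ := by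
  have hμ' : μ = stdGaussian (EuclideanSpace ℝ (Fin n)) := by
    rw [hμ, ← map_pi_eq_stdGaussian]; rfl
  clear hμ
  have hprob : IsProbabilityMeasure μ := by rw [hμ']; infer_instance
  have hgauss : IsGaussian μ := by rw [hμ']; infer_instance
  have hFm : Measurable F := hF.continuous.measurable
  have hDm : Measurable (fderiv ℝ F) := measurable_fderiv ℝ F
  set G : EuclideanSpace ℝ (Fin n) × EuclideanSpace ℝ (Fin n) → ℝ := fun p => fderiv ℝ F p.1 p.2 with hG
  have hGm : Measurable G := by
    have h1 : Measurable fun p : EuclideanSpace ℝ (Fin n) × EuclideanSpace ℝ (Fin n) => (fderiv ℝ F p.1, p.2) := by fun_prop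
    exact (isBoundedBilinearMap_apply (𝕜 := ℝ) (E := EuclideanSpace ℝ (Fin n)) (F := ℝ)).continuous.measurable.comp h1
  have hrot : ∀ θ, (μ.prod μ).map (ContinuousLinearMap.rotation θ) = μ.prod μ := by
    intro θ
    apply IsGaussian.map_rotation_eq_self
    rw [hμ']; simp
  set ν : Measure ℝ := volume.restrict (Set.Ioc 0 1) with hν
  have hνp : IsProbabilityMeasure ν := ⟨by simp [hν]⟩
  set R : ℝ → EuclideanSpace ℝ (Fin n) × EuclideanSpace ℝ (Fin n) → EuclideanSpace ℝ (Fin n) × EuclideanSpace ℝ (Fin n) := fun s p => ContinuousLinearMap.rotation (π / 2 * s) p with hR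
  have hRm : Measurable (fun q : ℝ × (EuclideanSpace ℝ (Fin n) × EuclideanSpace ℝ (Fin n)) => R q.1 q.2) := by
    simp only [hR, ContinuousLinearMap.rotation_apply]
    fun_prop
  have hderiv : ∀ (p : EuclideanSpace ℝ (Fin n) × EuclideanSpace ℝ (Fin n)) (s : ℝ),
      HasDerivAt (fun s => F (R s p).1) (π / 2 * G (R s p)) s := by
    intro p s
    have hlin : HasDerivAt (fun s : ℝ => π / 2 * s) (π / 2) s := by
      simpa using (hasDerivAt_id s).const_mul (π / 2)
    have h1 : HasDerivAt (fun s => (R s p).1) ((π / 2) • (R s p).2) s := by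
      simp only [hR, ContinuousLinearMap.rotation_apply]
      refine ((hlin.cos.smul_const p.1).add (hlin.sin.smul_const p.2)).congr_deriv ?_
      module
    have h2 := ((hF (R s p).1).hasFDerivAt).comp_hasDerivAt s h1
    rw [map_smul, smul_eq_mul] at h2
    exact h2
  -- pointwise bound
  have hpt : ∀ p : EuclideanSpace ℝ (Fin n) × EuclideanSpace ℝ (Fin n), ENNReal.ofReal (2 * Real.cosh (l * (F p.2 - F p.1))) ≤
      ∫⁻ s, ENNReal.ofReal (2 * Real.cosh (l * π / 2 * G (R s p))) ∂ν := by
    intro p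
    have hm : Measurable fun s => l * π / 2 * G (R s p) :=
      (hGm.comp (hRm.comp (measurable_id.prodMk measurable_const))).const_mul _
    rcases eq_or_ne l 0 with rfl | hl
    · simp
    by_cases hi : IntervalIntegrable (fun s => π / 2 * G (R s p)) volume 0 1
    · have := intervalIntegral.integral_eq_sub_of_hasDerivAt (fun s _ => hderiv p s) hi
      have h3 := pisier_jensen ν _ hm
      have h4 : ∫ s, l * π / 2 * G (R s p) ∂ν = l * (F p.2 - F p.1) := by
        have h5 : (F (R 1 p).1 - F (R 0 p).1) = F p.2 - F p.1 := by
          simp [hR, ContinuousLinearMap.rotation_apply]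
        rw [← h5, ← this, intervalIntegral.integral_of_le zero_le_one, ← integral_const_mul]
        congr 1; ext s; ring
      rwa [h4] at h3
    · suffices h : ∫⁻ s, ENNReal.ofReal (2 * Real.cosh (l * π / 2 * G (R s p))) ∂ν = ⊤ by
        rw [h]; exact le_top
      by_contra htop
      apply hi
      rw [intervalIntegrable_iff_integrableOn_Ioc_of_le zero_le_one]
      have hpos : ∀ t : ℝ, 0 ≤ 2 * Real.cosh t := fun t => by have := Real.cosh_pos t; positivity
      have hc : Integrable (fun s => 2 * Real.cosh (l * π / 2 * G (R s p))) ν := by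
        refine ⟨(Real.measurable_cosh.comp hm).const_mul 2 |>.aestronglyMeasurable, ?_⟩
        rw [hasFiniteIntegral_iff_ofReal (ae_of_all _ fun x => hpos _)]
        exact lt_top_iff_ne_top.2 htop
      have h6 : Integrable (fun s => l * π / 2 * G (R s p)) ν := by
        refine hc.mono hm.aestronglyMeasurable (ae_of_all _ fun x => ?_)
        rw [Real.norm_eq_abs, Real.norm_eq_abs, abs_of_nonneg (hpos _)]
        generalize l * π / 2 * G (R x p) = t
        rw [Real.cosh_eq, abs_le]
        have h1 := Real.add_one_le_exp t
        have h2 := Real.add_one_le_exp (-t)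
        have h3 := Real.exp_pos t
        have h4 := Real.exp_pos (-t)
        constructor <;> linarith
      have h7 := h6.const_mul l⁻¹
      refine h7.congr (ae_of_all _ fun s => ?_)
      field_simp
  have hgrad : ∀ x, ‖gradient F x‖ = ‖fderiv ℝ F x‖ := by
    intro x; simp [gradient]
  rcases le_or_gt l 0 with hl | hl
  · calc _ ≤ ∫⁻ ω, 1 ∂μ := by
          apply lintegral_mono; intro ω
          apply ENNReal.ofReal_le_one.2
          apply Real.exp_le_one_iff.2
          exact mul_nonpos_of_nonpos_of_nonneg hl (abs_nonneg _)
      _ ≤ ∫⁻ ω, ENNReal.ofReal (Real.exp (l ^ 2 * π ^ 2 / 8 * ‖gradient F ω‖ ^ 2)) ∂μ := by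
          apply lintegral_mono; intro ω
          apply ENNReal.one_le_ofReal.2
          apply Real.one_le_exp
          positivity
      _ ≤ _ := by
          rw [two_mul]; exact le_self_add
  calc _ ≤ ∫⁻ y, ENNReal.ofReal (2 * Real.cosh (l * (F y - ∫ x, F x ∂μ))) ∂μ := by
        apply lintegral_mono; intro y
        apply ENNReal.ofReal_le_ofReal
        rw [Real.cosh_eq]
        have h3 := Real.exp_pos (l * (F y - ∫ x, F x ∂μ))
        have h4 := Real.exp_pos (-(l * (F y - ∫ x, F x ∂μ)))
        rcases abs_choice (F y - ∫ x, F x ∂μ) with h | h <;> rw [h]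
        · linarith
        · rw [mul_neg]; linarith
    _ ≤ ∫⁻ y, ∫⁻ x, ENNReal.ofReal (2 * Real.cosh (l * (F y - F x))) ∂μ ∂μ := by
        apply lintegral_mono; intro y
        have := pisier_jensen μ (fun x => l * (F y - F x)) (by fun_prop)
        rw [integral_const_mul, integral_sub (integrable_const _) hFint] at this
        simpa using this
    _ ≤ ∫⁻ y, ∫⁻ x, ∫⁻ s, ENNReal.ofReal (2 * Real.cosh (l * π / 2 * G (R s (x, y)))) ∂ν ∂μ ∂μ :=
        lintegral_mono fun y => lintegral_mono fun x => hpt (x, y)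
    _ = ∫⁻ p, ∫⁻ s, ENNReal.ofReal (2 * Real.cosh (l * π / 2 * G (R s p))) ∂ν ∂(μ.prod μ) := by
        rw [lintegral_prod_symm]
        apply Measurable.aemeasurable
        apply Measurable.lintegral_prod_right'
          (f := fun q : (EuclideanSpace ℝ (Fin n) × EuclideanSpace ℝ (Fin n)) × ℝ => ENNReal.ofReal (2 * Real.cosh (l * π / 2 * G (R q.2 q.1))))
        have := hGm.comp (hRm.comp measurable_swap)
        have h2 : Measurable fun q : (EuclideanSpace ℝ (Fin n) × EuclideanSpace ℝ (Fin n)) × ℝ => G (R q.2 q.1) := this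
        fun_prop
    _ = ∫⁻ s, ∫⁻ p, ENNReal.ofReal (2 * Real.cosh (l * π / 2 * G (R s p))) ∂(μ.prod μ) ∂ν := by
        rw [lintegral_lintegral_swap]
        apply Measurable.aemeasurable
        have := hGm.comp (hRm.comp measurable_swap)
        have h2 : Measurable fun q : (EuclideanSpace ℝ (Fin n) × EuclideanSpace ℝ (Fin n)) × ℝ => G (R q.2 q.1) := this
        change Measurable fun q : (EuclideanSpace ℝ (Fin n) × EuclideanSpace ℝ (Fin n)) × ℝ => _
        fun_prop
    _ = ∫⁻ s, ∫⁻ p, ENNReal.ofReal (2 * Real.cosh (l * π / 2 * G p)) ∂(μ.prod μ) ∂ν := by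
        congr 1; ext s
        conv_rhs => rw [← hrot (π / 2 * s)]
        rw [lintegral_map (by fun_prop) (by fun_prop)]
    _ = ∫⁻ p, ENNReal.ofReal (2 * Real.cosh (l * π / 2 * G p)) ∂(μ.prod μ) := by simp
    _ = ∫⁻ x, ∫⁻ y, ENNReal.ofReal (2 * Real.cosh (l * π / 2 * fderiv ℝ F x y)) ∂μ ∂μ := by
        rw [lintegral_prod _ (by fun_prop)]
    _ = ∫⁻ x, 2 * ENNReal.ofReal (Real.exp (l ^ 2 * π ^ 2 / 8 * ‖gradient F x‖ ^ 2)) ∂μ := by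
        congr 1; ext x
        rw [hμ', pisier_mgf, hgrad]
        congr 3; ring
    _ = _ := by
        rw [lintegral_const_mul]
        simp_rw [hgrad]
        have := hDm.norm
        fun_prop
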